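/- arXiv:0708.4400 — 3 statements merged into one kernel-verified Lean document; each statement's English description precedes it below -/
import Mathlib

section
/- (a) For every n with 0 ≤ n ≤ k-1, a_{n+1} · s_n = reverse(s_n) · a_{n+1}. (b) For every n ≥ k, s_n · D_{n-k} = D_{n-k} · reverse(s_n); in particular D_{n-k} is a prefix of s_n. -/
/-!
Put `Q n = s_{n-1}^{d_n} ⋯ s_0^{d_1}`, so that `D_n = s_n^{d_{n+1}-1} Q_n` and
`Q_{n+1} = s_n^{d_{n+1}} Q_n = s_n D_n`. The recursion for `s_n` says exactly that
`s_n = Q_n a_{n+1}` for `n ≤ k-1` (`s_eq_Q`) and `s_n D_{n-k} = Q_n` for `n ≥ k` (`s_append_D`).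
Hence both claims follow once all `Q_n` and `D_n` are palindromes.

If `P` is a palindrome and `w P = P reverse(w)`, then every `w^p P` is a palindrome
(`pal_pw_append`). With `P = Q_n` and `w = s_n`, the commutation hypothesis holds: for `n ≤ k-1`
both sides are `Q_n a_{n+1} Q_n`, and for `n ≥ k` it follows from `Q_n = s_n D_{n-k}`, the two
words `Q_n` and `D_{n-k}` being palindromes by induction. So `Q_{n+1}` and `D_n` are palindromes
(`pal_Q`, `pal_D`).

Finally `s_n D_{n-k} = D_{n-k} reverse(s_n)` makes `D_{n-k}` a prefix of `s_n` as soon as it is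
not longer, which follows from `|D_n| ≤ |s_{n+1}|` (`length_D_le`) and the monotonicity of
`|s_n|`.
-/


namespace Epi

variable {α : Type*}

/-- `pw w p` is the `p`-fold concatenation `w^p`. -/
def pw (w : List α) : ℕ → List α
  | 0 => []
  | p + 1 => w ++ pw w p

/-- `S k a d m` is the word `s_{m-(k-1)}` of the paper (shifted indexing: `m : ℕ`
ranges over the indices `n ≥ 1-k`). -/
def S (k : ℕ) (a : ℕ → α) (d : ℕ → ℕ) : ℕ → List α
  | m =>
    if h : m < max k 1 then [a ((m + 1) % k + 1)]
    else
      ((List.range (k - 1)).map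
          (fun j => pw (S k a d (m - 1 - j)) (d (m + 1 - k - j)))).flatten ++
        S k a d (m - max k 1)
  termination_by m => m
  decreasing_by all_goals omega

/-- `s k a d n` is the word `s_n`, for `n ≥ 0`. -/
def s (k : ℕ) (a : ℕ → α) (d : ℕ → ℕ) (n : ℕ) : List α :=
  S k a d (n + (k - 1))

/-- `D k a d n` is the word `D_n = s_n^{d_{n+1}-1} s_{n-1}^{d_n} ⋯ s_1^{d_2} s_0^{d_1}`. -/
def D (k : ℕ) (a : ℕ → α) (d : ℕ → ℕ) (n : ℕ) : List α :=
  pw (s k a d n) (d (n + 1) - 1) ++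
    ((List.range n).map (fun j => pw (s k a d (n - 1 - j)) (d (n - j)))).flatten

/-- `G k a d n r` is the word `G_{n,r}`: `s_n` with its prefix of length `|D_{n-r}|` removed. -/
def G (k : ℕ) (a : ℕ → α) (d : ℕ → ℕ) (n r : ℕ) : List α :=
  (s k a d n).drop (D k a d (n - r)).length

/-- `Om k a d n r` is the set `Ω_n^r` of singular `n`-words of the `r`-th kind. -/
def Om (k : ℕ) (a : ℕ → α) (d : ℕ → ℕ) (n r : ℕ) : Set (List α) :=
  { w | w.length = (s k a d n).length ∧
      w <:+:
        ((((G k a d n r).reverse ++ D k a d (n - r) ++ G k a d n r).drop 1).dropLast) }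

/-- `w` is a factor of the infinite word `𝐬`. -/
def FactorS (k : ℕ) (a : ℕ → α) (d : ℕ → ℕ) (w : List α) : Prop :=
  ∃ N, w <:+: s k a d N

/-- The word `s_{n-1}^{d_n} s_{n-2}^{d_{n-1}} ⋯`, with `i` blocks. -/
def F (k : ℕ) (a : ℕ → α) (d : ℕ → ℕ) (n i : ℕ) : List α :=
  ((List.range i).map (fun j => pw (s k a d (n - 1 - j)) (d (n - j)))).flatten

/-- The word `s_{n-1}^{d_n} ⋯ s_1^{d_2} s_0^{d_1}`; empty for `n = 0`. -/
def Q (k : ℕ) (a : ℕ → α) (d : ℕ → ℕ) (n : ℕ) : List α := F k a d n n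

theorem F_succ (k : ℕ) (a : ℕ → α) (d : ℕ → ℕ) (n i : ℕ) :
    F k a d n (i + 1) = F k a d n i ++ pw (s k a d (n - 1 - i)) (d (n - i)) := by
  simp [F, List.range_succ]

theorem Q_succ (k : ℕ) (a : ℕ → α) (d : ℕ → ℕ) (n : ℕ) :
    Q k a d (n + 1) = pw (s k a d n) (d (n + 1)) ++ Q k a d n := by
  rw [Q, Q, F, F, List.range_succ_eq_map, List.map_cons, List.flatten_cons, List.map_map]
  congr 3
  funext j
  have h1 : n + 1 - 1 - (j + 1) = n - 1 - j := by omega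
  have h2 : n + 1 - (j + 1) = n - j := by omega
  simp only [Function.comp_apply, Nat.succ_eq_add_one, h1, h2]

theorem Q_split (k : ℕ) (a : ℕ → α) (d : ℕ → ℕ) (n i : ℕ) (h : i ≤ n) :
    Q k a d n = F k a d n i ++ Q k a d (n - i) := by
  induction i with
  | zero => simp [F]
  | succ i ih =>
    rw [ih (by omega), F_succ]
    obtain ⟨m, hm⟩ : ∃ m, n - i = m + 1 := ⟨n - i - 1, by omega⟩
    have h1 : n - 1 - i = m := by omega
    have h2 : n - (i + 1) = m := by omega
    rw [hm, h1, h2, Q_succ, List.append_assoc]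

/-- Blocks beyond the `n`-th carry the exponent `d 0 = 0`. -/
theorem F_eq_Q (k : ℕ) (a : ℕ → α) (d : ℕ → ℕ) (hd0 : d 0 = 0) (n t : ℕ) :
    F k a d n (n + t) = Q k a d n := by
  induction t with
  | zero => rfl
  | succ t ih =>
    rw [← Nat.add_assoc, F_succ, ih]
    simp [hd0, pw]

theorem D_eq (k : ℕ) (a : ℕ → α) (d : ℕ → ℕ) (n : ℕ) :
    D k a d n = pw (s k a d n) (d (n + 1) - 1) ++ Q k a d n := rfl

theorem pw_pos {w : List α} {p : ℕ} (h : 1 ≤ p) : pw w p = w ++ pw w (p - 1) := by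
  obtain ⟨q, rfl⟩ : ∃ q, p = q + 1 := ⟨p - 1, by omega⟩
  rfl

theorem s_append_D_self (k : ℕ) (a : ℕ → α) (d : ℕ → ℕ) (hd : ∀ i, 1 ≤ i → 1 ≤ d i) (n : ℕ) :
    s k a d n ++ D k a d n = Q k a d (n + 1) := by
  rw [D_eq, Q_succ, pw_pos (hd (n + 1) (by omega)), List.append_assoc]

/-- The recursion in a form covering both of its regimes. -/
theorem s_unfold (k : ℕ) (hk : 2 ≤ k) (a : ℕ → α) (d : ℕ → ℕ) (hd0 : d 0 = 0) (n : ℕ)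
    (hn : 1 ≤ n) : s k a d n = F k a d n (k - 1) ++ S k a d (n - 1) := by
  have hmax : max k 1 = k := by omega
  rw [s, S, dif_neg (by omega), hmax, F]
  congr 1
  · congr 1
    apply List.map_congr_left
    intro j hj
    rw [List.mem_range] at hj
    have e1 : n + (k - 1) + 1 - k - j = n - j := by omega
    rw [e1]
    by_cases h : j < n
    · have e2 : n + (k - 1) - 1 - j = n - 1 - j + (k - 1) := by omega
      rw [e2, s]
    · have e3 : n - j = 0 := by omega
      rw [e3, hd0, pw, pw]
  · congr 1
    omega

theorem s_eq_Q (k : ℕ) (hk : 2 ≤ k) (a : ℕ → α) (d : ℕ → ℕ) (hd0 : d 0 = 0) (n : ℕ)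
    (hn : n < k) : s k a d n = Q k a d n ++ [a (n + 1)] := by
  have hmax : max k 1 = k := by omega
  rcases Nat.eq_zero_or_pos n with rfl | h
  · have e : 0 + (k - 1) + 1 = k := by omega
    rw [s, S, dif_pos (by omega), e, Nat.mod_self]
    rfl
  · rw [s_unfold k hk a d hd0 n h, S, dif_pos (by omega)]
    have e : k - 1 = n + (k - 1 - n) := by omega
    have e2 : n - 1 + 1 = n := by omega
    rw [e, F_eq_Q k a d hd0, e2, Nat.mod_eq_of_lt hn]

theorem s_append_D (k : ℕ) (hk : 2 ≤ k) (a : ℕ → α) (d : ℕ → ℕ) (hd0 : d 0 = 0)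
    (hd : ∀ i, 1 ≤ i → 1 ≤ d i) (n : ℕ) (hn : k ≤ n) :
    s k a d n ++ D k a d (n - k) = Q k a d n := by
  rw [s_unfold k hk a d hd0 n (by omega), Q_split k a d n (k - 1) (by omega)]
  have e : n - 1 = n - k + (k - 1) := by omega
  have e2 : n - (k - 1) = n - k + 1 := by omega
  rw [e, ← s, List.append_assoc, s_append_D_self k a d hd, e2]

theorem pal_pw_append {w P : List α} (hP : P.reverse = P) (h : w ++ P = P ++ w.reverse) (p : ℕ) :
    (pw w p ++ P).reverse = pw w p ++ P := by
  induction p with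
  | zero => simpa [pw] using hP
  | succ p ih =>
    -- moving `w` through `w^p P` from left to right turns it into its reversal
    have key : ∀ q, w ++ (pw w q ++ P) = pw w q ++ P ++ w.reverse := by
      intro q
      induction q with
      | zero => simpa [pw] using h
      | succ q ihq =>
        simp only [pw, List.append_assoc] at ihq ⊢
        rw [ihq]
    rw [pw, List.append_assoc, List.reverse_append, ih, key]

theorem s_append_Q (k : ℕ) (hk : 2 ≤ k) (a : ℕ → α) (d : ℕ → ℕ) (hd0 : d 0 = 0)
    (hd : ∀ i, 1 ≤ i → 1 ≤ d i) (n : ℕ) (hQ : (Q k a d n).reverse = Q k a d n)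
    (hD : k ≤ n → (D k a d (n - k)).reverse = D k a d (n - k)) :
    s k a d n ++ Q k a d n = Q k a d n ++ (s k a d n).reverse := by
  rcases Nat.lt_or_ge n k with h | h
  · rw [s_eq_Q k hk a d hd0 n h, List.reverse_append, hQ]
    simp
  · have h1 := s_append_D k hk a d hd0 hd n h
    have h2 : D k a d (n - k) ++ (s k a d n).reverse = Q k a d n := by
      rw [← hQ, ← h1, List.reverse_append, hD h]
    conv_lhs => rw [← h2]
    rw [← List.append_assoc, h1]

theorem pal_Q (k : ℕ) (hk : 2 ≤ k) (a : ℕ → α) (d : ℕ → ℕ) (hd0 : d 0 = 0)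
    (hd : ∀ i, 1 ≤ i → 1 ≤ d i) (n : ℕ) : (Q k a d n).reverse = Q k a d n := by
  induction n using Nat.strong_induction_on with
  | _ n ih =>
    -- `D_m` is built from `Q_m`, so its symmetry is available for all `m < n` as well
    have hD : ∀ m, m < n → (D k a d m).reverse = D k a d m := by
      intro m
      induction m using Nat.strong_induction_on with
      | _ m ihm =>
        intro hm
        exact pal_pw_append (ih m hm) (s_append_Q k hk a d hd0 hd m (ih m hm)
          fun h => ihm _ (by omega) (by omega)) _
    rcases n with _ | n
    · rfl
    · rw [Q_succ]
      exact pal_pw_append (ih n (by omega)) (s_append_Q k hk a d hd0 hd n (ih n (by omega))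
        fun h => hD _ (by omega)) _

theorem pal_D (k : ℕ) (hk : 2 ≤ k) (a : ℕ → α) (d : ℕ → ℕ) (hd0 : d 0 = 0)
    (hd : ∀ i, 1 ≤ i → 1 ≤ d i) (n : ℕ) : (D k a d n).reverse = D k a d n := by
  induction n using Nat.strong_induction_on with
  | _ n ih =>
    have hQ := pal_Q k hk a d hd0 hd n
    exact pal_pw_append hQ
      (s_append_Q k hk a d hd0 hd n hQ fun h => ih _ (by omega)) _

theorem length_s_mono (k : ℕ) (hk : 2 ≤ k) (a : ℕ → α) (d : ℕ → ℕ) (hd0 : d 0 = 0)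
    (hd : ∀ i, 1 ≤ i → 1 ≤ d i) : Monotone fun n => (s k a d n).length := by
  apply monotone_nat_of_le_succ
  intro n
  -- the recursion for `s_{n+1}` starts with the block `s_n^{d_{n+1}}`, and `d_{n+1} ≥ 1`
  obtain ⟨i, hi⟩ : ∃ i, k - 1 = i + 1 := ⟨k - 2, by omega⟩
  rw [s_unfold k hk a d hd0 (n + 1) (by omega), hi, F, List.range_succ_eq_map]
  simp only [List.map_cons, List.flatten_cons, Nat.sub_zero, Nat.add_sub_cancel]
  rw [pw_pos (hd (n + 1) (by omega))]
  simp only [List.length_append]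
  omega

theorem length_D_le (k : ℕ) (hk : 2 ≤ k) (a : ℕ → α) (d : ℕ → ℕ) (hd0 : d 0 = 0)
    (hd : ∀ i, 1 ≤ i → 1 ≤ d i) (n : ℕ) :
    (D k a d n).length ≤ (s k a d (n + 1)).length := by
  induction n using Nat.strong_induction_on with
  | _ n ih =>
    have h1 := congrArg List.length (s_append_D_self k a d hd n)
    rw [List.length_append] at h1
    rcases Nat.lt_or_ge (n + 1) k with h | h
    · have h2 := congrArg List.length (s_eq_Q k hk a d hd0 (n + 1) h)
      rw [List.length_append] at h2
      omega
    · have h2 := congrArg List.length (s_append_D k hk a d hd0 hd (n + 1) h)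
      rw [List.length_append] at h2
      -- `|s_n| + |D_n| = |s_{n+1}| + |D_{n+1-k}|`, and `|D_{n+1-k}| ≤ |s_{n+2-k}| ≤ |s_n|`
      have h3 := ih (n + 1 - k) (by omega)
      have h4 : (s k a d (n + 1 - k + 1)).length ≤ (s k a d n).length :=
        length_s_mono k hk a d hd0 hd (by omega)
      omega

theorem stmt4 {α : Type*} (k : ℕ) (hk : 2 ≤ k) (a : ℕ → α)
    (ha : ∀ i j, 1 ≤ i → i ≤ k → 1 ≤ j → j ≤ k → a i = a j → i = j)
    (d : ℕ → ℕ) (hd0 : d 0 = 0) (hd : ∀ i, 1 ≤ i → 1 ≤ d i) :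
    (∀ n : ℕ, n ≤ k - 1 →
        [a (n + 1)] ++ s k a d n = (s k a d n).reverse ++ [a (n + 1)]) ∧
    (∀ n : ℕ, k ≤ n →
        s k a d n ++ D k a d (n - k) = D k a d (n - k) ++ (s k a d n).reverse ∧
        D k a d (n - k) <+: s k a d n) := by
  refine ⟨fun n hn => ?_, fun n hn => ?_⟩
  · rw [s_eq_Q k hk a d hd0 n (by omega), List.reverse_append, pal_Q k hk a d hd0 hd]
    simp
  · have h1 := s_append_D k hk a d hd0 hd n hn
    have h2 : s k a d n ++ D k a d (n - k) = D k a d (n - k) ++ (s k a d n).reverse := by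
      rw [h1, ← pal_Q k hk a d hd0 hd n, ← h1, List.reverse_append, pal_D k hk a d hd0 hd]
    refine ⟨h2, ?_⟩
    have h3 : (D k a d (n - k)).length ≤ (s k a d n).length :=
      (length_D_le k hk a d hd0 hd (n - k)).trans (length_s_mono k hk a d hd0 hd (by omega))
    exact List.prefix_of_prefix_length_le ⟨_, h2.symm⟩ (List.prefix_append _ _) h3

end Epi
end

section
/- For every n ≥ 1: the word s_n · s_n · D_n is a factor of 𝐬 and a factor of the periodic word s_n^ω; moreover every finite word that is a factor of both 𝐬 and s_n^ω has length at most 2|s_n| + |D_n|. (Hence the index of s_n in 𝐬 equals (2|s_n| + |D_n|)/|s_n|, which is 2 + d_{n+1} + |D_{n-k}|/|s_n| for n ≥ k; in particular 𝐬 contains cubes.) -/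
/-!
Let `ψ_c` be the morphism fixing `c` and sending `b ≠ c` to `cb`. Rotating the alphabet to
`a_2, …, a_k, a_1` and shifting the exponents gives words `s'_n`, `D'_n` of the same kind, and with
`p = d_1`
  `s_{n+1} = ψ_{a_1}^p(s'_n)`,  `D_{n+1} = ψ_{a_1}^p(D'_n) a_1^p`
(`s_shift`, `D_shift`). So with `θ(x) = ψ_{a_1}^p(x) a_1^p` (`th`) the word `s_{n+1} s_{n+1} D_{n+1}`
is `θ(s'_n s'_n D'_n)`, and everything is proved by induction on `n`, over all data at once.

The map `θ` is monotone for the factor relation and carries factors of `𝐬'` to factors of `𝐬`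
(`th_infix`, `th_factor`); this gives the two existence claims. For the upper bound the induction
shows more: every common factor of `𝐬` and `s_n^ω` is a factor of `s_n s_n D_n` (`common_factor`).
Since occurrences of `c` mark the block boundaries in `ψ_c(x) c`, decoding a factor does not depend
on the word in which it occurs, so a common factor of `θ(x)` and `θ(y)` is a factor of `θ(v)` for
some common factor `v` of `x` and `y` (`th_desub`). In the case `n = 0`, the letter `a_1` is isolated
in `𝐬'`, so `v` is empty or `a_1`, and `θ(a_1) = a_1^{d_1+1} = s_0 s_0 D_0`.
-/


namespace Epi

variable {α : Type*}

/-! ### Powers and flattened products -/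

theorem pw_append (w : List α) (i j : ℕ) : pw w (i + j) = pw w i ++ pw w j := by
  induction i with
  | zero => simp [pw]
  | succ i ih => rw [Nat.succ_add]; simp [pw, ih]

theorem pw_singleton (x : α) (p : ℕ) : pw [x] p = List.replicate p x := by
  induction p with
  | zero => rfl
  | succ p ih => simp [pw, ih, List.replicate_succ]

/-- Two products over `range K` that agree except that the second has an empty factor at
position `q` and both have only empty factors beyond `q`. -/
theorem flatten_split (f g : ℕ → List α) (q : ℕ) (h1 : ∀ j, j < q → f j = g j)
    (hg : g q = []) (h2 : ∀ j, q < j → f j = [] ∧ g j = []) (K : ℕ) :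
    ((List.range K).map f).flatten =
      ((List.range K).map g).flatten ++ (if q < K then f q else []) := by
  induction K with
  | zero => simp
  | succ K ih =>
    rw [List.range_succ, List.map_append, List.flatten_append, ih, List.map_append,
      List.flatten_append]
    rcases lt_trichotomy K q with h | h | h
    · have : ¬ q < K := by omega
      have h' : ¬ q < K + 1 := by omega
      simp [this, h', h1 K h]
    · subst h; simp [hg]
    · have h' : q < K + 1 := by omega
      simp [h, h', h2 K h]

theorem prefix_pw (c : α) (X T : List α) (hX : [c] <+: X) (hT : [c] <+: T) (p : ℕ) :
    [c] <+: pw X p ++ T := by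
  cases p with
  | zero => simpa [pw] using hT
  | succ p => rw [pw, List.append_assoc]; exact hX.trans (List.prefix_append _ _)

theorem prefix_flatten (c : α) (T : List α) (hT : [c] <+: T) (X : ℕ → List α) (e : ℕ → ℕ)
    (L : List ℕ) (hX : ∀ j ∈ L, [c] <+: X j) :
    [c] <+: (L.map (fun j => pw (X j) (e j))).flatten ++ T := by
  induction L with
  | nil => simpa using hT
  | cons i L ih =>
    rw [List.map_cons, List.flatten_cons, List.append_assoc]
    exact prefix_pw c _ _ (hX i (by simp)) (ih fun j hj => hX j (by simp [hj])) _

/-! ### The episturmian morphisms and desubstitution -/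

section Morphism
variable [DecidableEq α]

/-- The elementary episturmian morphism `ψ_c`: `c ↦ c` and `b ↦ cb` for `b ≠ c`. -/
def psi (c : α) : List α → List α
  | [] => []
  | b :: t => if b = c then c :: psi c t else c :: b :: psi c t

/-- The iterate `ψ_c^p`. -/
def mu (c : α) : ℕ → List α → List α
  | 0, x => x
  | p + 1, x => psi c (mu c p x)

/-- The `p`-th iterate of `x ↦ ψ_c(x) c`; it equals `x ↦ ψ_c^p(x) c^p`, see `th_eq`. -/
def th (c : α) : ℕ → List α → List α
  | 0, x => x
  | p + 1, x => psi c (th c p x) ++ [c]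

theorem psi_append (c : α) (x y : List α) : psi c (x ++ y) = psi c x ++ psi c y := by
  induction x with
  | nil => rfl
  | cons b x ih => by_cases h : b = c <;> simp [psi, h, ih]

theorem mu_append (c : α) (p : ℕ) (x y : List α) : mu c p (x ++ y) = mu c p x ++ mu c p y := by
  induction p with
  | zero => rfl
  | succ p ih => simp [mu, ih, psi_append]

theorem mu_nil (c : α) (p : ℕ) : mu c p [] = [] := by
  induction p with
  | zero => rfl
  | succ p ih => simp [mu, ih, psi]

theorem mu_pw (c : α) (p : ℕ) (x : List α) (q : ℕ) : mu c p (pw x q) = pw (mu c p x) q := by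
  induction q with
  | zero => simp [pw, mu_nil]
  | succ q ih => simp [pw, mu_append, ih]

theorem mu_flatten (c : α) (p : ℕ) (f : ℕ → List α) (L : List ℕ) :
    mu c p ((L.map f).flatten) = (L.map (fun j => mu c p (f j))).flatten := by
  induction L with
  | nil => simp [mu_nil]
  | cons i L ih => simp [mu_append, ih]

theorem psi_replicate (c : α) (q : ℕ) : psi c (List.replicate q c) = List.replicate q c := by
  induction q with
  | zero => rfl
  | succ q ih => simp [List.replicate_succ, psi, ih]

theorem mu_replicate (c : α) (p q : ℕ) : mu c p (List.replicate q c) = List.replicate q c := by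
  induction p with
  | zero => rfl
  | succ p ih => simp [mu, ih, psi_replicate]

theorem mu_self (c : α) (p : ℕ) : mu c p [c] = [c] := mu_replicate c p 1

theorem mu_ne (c b : α) (h : b ≠ c) (p : ℕ) : mu c p [b] = List.replicate p c ++ [b] := by
  induction p with
  | zero => rfl
  | succ p ih =>
    rw [mu, ih, psi_append, psi_replicate, List.replicate_succ']
    simp [psi, h]

theorem th_eq (c : α) (p : ℕ) (x : List α) : th c p x = mu c p x ++ List.replicate p c := by
  induction p with
  | zero => simp [th, mu]
  | succ p ih => rw [th, ih, psi_append, psi_replicate, mu, List.replicate_succ']; simp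

theorem head_psi (c : α) (x : List α) : [c] <+: psi c x ++ [c] := by
  cases x with
  | nil => exact List.prefix_rfl
  | cons b x => by_cases h : b = c <;> simp [psi, h]

theorem psi_infix (c : α) {x y : List α} (h : x <:+: y) :
    psi c x ++ [c] <:+: psi c y ++ [c] := by
  obtain ⟨u, v, rfl⟩ := h
  obtain ⟨r, hr⟩ := head_psi c v
  refine ⟨psi c u, r, ?_⟩
  simp only [psi_append, List.append_assoc] at hr ⊢
  rw [← hr]

theorem th_infix (c : α) (p : ℕ) {x y : List α} (h : x <:+: y) : th c p x <:+: th c p y := by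
  induction p with
  | zero => exact h
  | succ p ih => exact psi_infix c ih

/-- The decoding of a word made of blocks `c`, `cb` (and possibly a last `c`, which is only the
start of a block and is discarded). -/
def dec (c : α) : List α → List α
  | [] => []
  | [_] => []
  | _ :: v :: t => if v = c then c :: dec c (v :: t) else v :: dec c t

theorem dec_prefix (c : α) (x : List α) : ∀ z, z <+: psi c x ++ [c] →
    dec c z <+: x ∧ z <+: psi c (dec c z) ++ [c] := by
  induction x with
  | nil =>
    intro z hz
    rcases z with _ | ⟨u, _ | ⟨v, t⟩⟩
    · simp [dec]
    · simpa [dec, psi] using hz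
    · have := hz.length_le; simp [psi] at this
  | cons b x ih =>
    intro z hz
    rcases z with _ | ⟨u, _ | ⟨v, t⟩⟩
    · simp [dec]
    · by_cases h : b = c <;> simp [dec, psi, h] at hz ⊢ <;> exact hz
    · by_cases h : b = c
      · subst h
        simp only [psi, if_true, List.cons_append, List.cons_prefix_cons] at hz
        obtain ⟨rfl, hz⟩ := hz
        obtain ⟨r, hr⟩ := head_psi u x
        have hv : v = u := by
          rw [← hr, List.singleton_append, List.cons_prefix_cons] at hz
          exact hz.1
        have := ih _ hz
        simp only [dec, hv, if_true] at this ⊢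
        simpa [psi] using this
      · simp only [psi, if_neg h, List.cons_append, List.cons_prefix_cons] at hz
        obtain ⟨rfl, rfl, hz⟩ := hz
        have := ih _ hz
        simpa [dec, psi, h] using this

theorem infix_head (c : α) (t x : List α) (h : c :: t <:+: psi c x ++ [c]) :
    ∃ y, y <:+ x ∧ c :: t <+: psi c y ++ [c] := by
  induction x with
  | nil =>
    refine ⟨[], List.suffix_rfl, ?_⟩
    simp only [psi, List.nil_append] at h ⊢
    have hl := h.length_le
    rw [h.eq_of_length_le (by simp)]
  | cons b x ih =>
    by_cases hp : c :: t <+: psi c (b :: x) ++ [c]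
    · exact ⟨_, List.suffix_rfl, hp⟩
    · suffices hs : c :: t <:+: psi c x ++ [c] by
        obtain ⟨y, hy, hy'⟩ := ih hs
        exact ⟨y, hy.trans (List.suffix_cons _ _), hy'⟩
      by_cases hb : b = c
      · simp only [psi, if_pos hb, List.cons_append] at h hp
        exact (List.infix_cons_iff.1 h).resolve_left hp
      · simp only [psi, if_neg hb, List.cons_append] at h hp
        have h := (List.infix_cons_iff.1 h).resolve_left hp
        refine (List.infix_cons_iff.1 h).resolve_left fun h => ?_
        exact hb (List.cons_prefix_cons.1 h).1.symm

/-- Inside `ψ_c(x) c`, every occurrence of a letter `b ≠ c` is preceded by `c`. -/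
theorem infix_extend (c b : α) (hb : b ≠ c) (t x : List α) (h : b :: t <:+: psi c x ++ [c]) :
    c :: b :: t <:+: psi c x ++ [c] := by
  induction x with
  | nil =>
    simp only [psi, List.nil_append] at h
    have hl := h.length_le
    have := h.eq_of_length_le (by simp)
    simp [hb] at this
  | cons e x ih =>
    have key : b :: t <:+: psi c x ++ [c] → c :: b :: t <:+: psi c (e :: x) ++ [c] := by
      intro h
      refine (ih h).trans ?_
      by_cases he : e = c
      · simp only [psi, if_pos he]; exact (List.suffix_cons _ _).isInfix
      · simp only [psi, if_neg he]
        exact ((List.suffix_cons _ _).trans (List.suffix_cons _ _)).isInfix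
    by_cases he : e = c
    · refine key ?_
      simp only [psi, if_pos he, List.cons_append] at h
      refine (List.infix_cons_iff.1 h).resolve_left fun h => ?_
      exact hb (List.cons_prefix_cons.1 h).1
    · have h0 := h
      simp only [psi, if_neg he, List.cons_append] at h
      have h := (List.infix_cons_iff.1 h).resolve_left
        fun h => hb (List.cons_prefix_cons.1 h).1
      rcases List.infix_cons_iff.1 h with h | h
      · simp only [psi, if_neg he, List.cons_append]
        exact (List.cons_prefix_cons.2 ⟨rfl, h⟩).isInfix
      · exact key h

/-- Simultaneous desubstitution: because the decoding depends only on the word, a common factor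
of the images of `x` and `y` comes from a common factor of `x` and `y`. -/
theorem psi_desub (c : α) (w x y : List α) (hx : w <:+: psi c x ++ [c])
    (hy : w <:+: psi c y ++ [c]) :
    ∃ v, v <:+: x ∧ v <:+: y ∧ w <:+: psi c v ++ [c] := by
  have key : ∀ t, c :: t <:+: psi c x ++ [c] → c :: t <:+: psi c y ++ [c] →
      ∃ v, v <:+: x ∧ v <:+: y ∧ c :: t <:+: psi c v ++ [c] := by
    intro t hx hy
    obtain ⟨x', hx', hx⟩ := infix_head c t x hx
    obtain ⟨y', hy', hy⟩ := infix_head c t y hy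
    exact ⟨dec c (c :: t), (dec_prefix c x' _ hx).1.isInfix.trans hx'.isInfix,
      (dec_prefix c y' _ hy).1.isInfix.trans hy'.isInfix, (dec_prefix c x' _ hx).2.isInfix⟩
  rcases w with _ | ⟨b, t⟩
  · exact ⟨[], List.nil_infix, List.nil_infix, List.nil_infix⟩
  · by_cases hb : b = c
    · subst hb; exact key t hx hy
    · obtain ⟨v, h1, h2, h3⟩ := key (b :: t) (infix_extend c b hb t x hx)
        (infix_extend c b hb t y hy)
      exact ⟨v, h1, h2, (List.suffix_cons _ _).isInfix.trans h3⟩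

theorem th_desub (c : α) (p : ℕ) : ∀ (w x y : List α), w <:+: th c p x → w <:+: th c p y →
    ∃ v, v <:+: x ∧ v <:+: y ∧ w <:+: th c p v := by
  induction p with
  | zero => exact fun w x y hx hy => ⟨w, hx, hy, List.infix_rfl⟩
  | succ p ih =>
    intro w x y hx hy
    obtain ⟨v, h1, h2, h3⟩ := psi_desub c w _ _ hx hy
    obtain ⟨u, h4, h5, h6⟩ := ih v x y h1 h2
    exact ⟨u, h4, h5, h3.trans (psi_infix c h6)⟩

theorem isChain_psi (c : α) (x : List α) :
    List.IsChain (fun u v => u = c ∨ v = c) (psi c x ++ [c]) := by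
  induction x with
  | nil => simp [psi]
  | cons b x ih =>
    obtain ⟨r, hr⟩ := head_psi c x
    rw [← hr] at ih
    by_cases hb : b = c <;> simp only [psi, hb, if_true, if_false, List.cons_append] <;>
      rw [← hr] <;> simpa using ih

/-- A letter `b ≠ c` is isolated in every `ψ_c`-image. -/
theorem no_square (c b : α) (hb : b ≠ c) (x : List α) : ¬ [b, b] <:+: psi c x := by
  intro h
  have := (isChain_psi c x).infix (h.trans (List.prefix_append _ _).isInfix)
  simp [hb] at this

end Morphism

/-! ### The recurrence and the shifted directive sequence -/

theorem S_lt (k : ℕ) (a : ℕ → α) (d : ℕ → ℕ) (m : ℕ) (h : m < k) :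
    S k a d m = [a ((m + 1) % k + 1)] := by
  rw [S, dif_pos (by omega)]

theorem S_ge (k : ℕ) (hk : 2 ≤ k) (a : ℕ → α) (d : ℕ → ℕ) (m : ℕ) (h : k ≤ m) :
    S k a d m = ((List.range (k - 1)).map
          (fun j => pw (S k a d (m - 1 - j)) (d (m + 1 - k - j)))).flatten ++
        S k a d (m - k) := by
  rw [S, dif_neg (by omega), max_eq_left (by omega)]

/-- The alphabet rotated by one: `a_2, …, a_k, a_1`. -/
def sha (k : ℕ) (a : ℕ → α) (i : ℕ) : α := a (i % k + 1)

/-- The exponents shifted by one, with value `0` kept at index `0`. -/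
def shd (d : ℕ → ℕ) (i : ℕ) : ℕ := if i = 0 then 0 else d (i + 1)

theorem s_zero (k : ℕ) (hk : 2 ≤ k) (a : ℕ → α) (d : ℕ → ℕ) : s k a d 0 = [a 1] := by
  rw [s, S_lt _ _ _ _ (by omega)]
  have : (0 + (k - 1) + 1) % k = 0 := by rw [show 0 + (k - 1) + 1 = k by omega]; simp
  rw [this]

/-- The hypotheses on the letters and exponents, bundled. -/
structure Good (k : ℕ) (a : ℕ → α) (d : ℕ → ℕ) : Prop where
  hk : 2 ≤ k
  ha : ∀ i j, 1 ≤ i → i ≤ k → 1 ≤ j → j ≤ k → a i = a j → i = j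
  hd0 : d 0 = 0
  hd : ∀ i, 1 ≤ i → 1 ≤ d i

theorem sha_lt (k : ℕ) (a : ℕ → α) (i : ℕ) (h : i < k) : sha k a i = a (i + 1) := by
  rw [sha, Nat.mod_eq_of_lt h]

theorem sha_self (k : ℕ) (a : ℕ → α) : sha k a k = a 1 := by
  rw [sha, Nat.mod_self]

theorem Good.shift {k : ℕ} {a : ℕ → α} {d : ℕ → ℕ} (h : Good k a d) :
    Good k (sha k a) (shd d) where
  hk := h.hk
  hd0 := by simp [shd]
  hd := by
    intro i hi
    rw [shd, if_neg (by omega)]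
    exact h.hd _ (by omega)
  ha := by
    have hk := h.hk
    intro i j hi hik hj hjk e
    rcases hik.lt_or_eq with hi' | rfl <;> rcases hjk.lt_or_eq with hj' | rfl
    · rw [sha_lt _ _ _ hi', sha_lt _ _ _ hj'] at e
      have := h.ha _ _ (by omega) (by omega) (by omega) (by omega) e
      omega
    · rw [sha_lt _ _ _ hi', sha_self] at e
      have := h.ha _ _ (by omega) (by omega) (by omega) (by omega) e
      omega
    · rw [sha_lt _ _ _ hj', sha_self] at e
      have := h.ha _ _ (by omega) (by omega) (by omega) (by omega) e
      omega
    · rfl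

section Shift
variable [DecidableEq α]

/-- `s_n = ψ_{a_1}^{d_1}(s'_{n-1})` for `n ≥ 0`, where `s'` is built from the shifted data;
the index `m` stands for `n + k - 2`. -/
theorem S_shift {k : ℕ} {a : ℕ → α} {d : ℕ → ℕ} (h : Good k a d) (m : ℕ) (hm : k ≤ m + 2) :
    S k a d (m + 1) = mu (a 1) (d 1) (S k (sha k a) (shd d) m) := by
  have hk := h.hk
  have hne : ∀ n, 1 ≤ n → n < k → a (n + 1) ≠ a 1 := by
    intro n h1 h2 e
    have := h.ha _ _ (by omega) (by omega) (by omega) (by omega) e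
    omega
  induction m using Nat.strong_induction_on with
  | _ m ih =>
  have hs0 : S k a d (k - 1) = [a 1] := by
    have := s_zero k hk a d
    rwa [s, Nat.zero_add] at this
  rcases Nat.lt_or_ge (m + 1) k with h1 | h1
  · have e : m + 1 = k - 1 := by omega
    rw [S_lt k (sha k a) _ _ (by omega), Nat.mod_eq_of_lt h1, e, hs0,
      show k - 1 + 1 = k by omega, sha_self, mu_self]
  rw [S_ge k hk _ _ _ h1]
  rcases Nat.lt_or_ge (m + 2) (2 * k) with h2 | h2
  · -- Here `n = m + 2 - k` satisfies `1 ≤ n ≤ k - 1`: the factor `s_0^{d_1}` on the left is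
    -- produced on the right by the image of the final letter.
    obtain ⟨q, hq⟩ : ∃ q, m = q + (k - 1) := ⟨m + 1 - k, by omega⟩
    have hf : ∀ g : ℕ → List α,
        (∀ j, j < q → pw (S k a d (m + 1 - 1 - j)) (d (m + 1 + 1 - k - j)) = g j) →
        (∀ j, q ≤ j → g j = []) →
        ((List.range (k - 1)).map
          (fun j => pw (S k a d (m + 1 - 1 - j)) (d (m + 1 + 1 - k - j)))).flatten =
        ((List.range (k - 1)).map g).flatten ++ List.replicate (d 1) (a 1) := by
      intro g hg1 hg2
      rw [flatten_split _ g q hg1 (hg2 q le_rfl) ?_ (k - 1), if_pos (by omega),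
        show m + 1 - 1 - q = k - 1 by omega, hs0, show m + 1 + 1 - k - q = 1 by omega,
        pw_singleton]
      intro j hj
      refine ⟨?_, hg2 j (by omega)⟩
      rw [show m + 1 + 1 - k - j = 0 by omega, h.hd0, pw]
    have hlast : S k a d (m + 1 - k) = [a (q + 1 + 1)] := by
      rw [S_lt _ _ _ _ (by omega), Nat.mod_eq_of_lt (by omega),
        show m + 1 - k = q by omega]
    rcases Nat.eq_zero_or_pos q with hq0 | hq0
    · rw [hf (fun _ => []) (by omega) (fun _ _ => rfl), hlast, S_lt k (sha k a) _ _ (by omega),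
        show m + 1 = k by omega, Nat.mod_self, sha_lt _ _ _ (by omega),
        mu_ne _ _ (hne _ (by omega) (by omega)), hq0]
      simp
    · rw [S_ge k hk (sha k a) _ _ (by omega), mu_append, mu_flatten,
        hf (fun j => mu (a 1) (d 1)
          (pw (S k (sha k a) (shd d) (m - 1 - j)) (shd d (m + 1 - k - j)))) ?_ ?_, hlast,
        S_lt k (sha k a) _ _ (by omega), Nat.mod_eq_of_lt (by omega),
        show m - k + 1 + 1 = q + 1 by omega, sha_lt _ _ _ (by omega),
        mu_ne _ _ (hne _ (by omega) (by omega)), List.append_assoc]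
      · intro j hj
        rw [mu_pw, shd, if_neg (by omega), ← ih (m - 1 - j) (by omega) (by omega),
          show m - 1 - j + 1 = m + 1 - 1 - j by omega,
          show m + 1 - k - j + 1 = m + 1 + 1 - k - j by omega]
      · intro j hj
        rw [show m + 1 - k - j = 0 by omega, shd, if_pos rfl, pw, mu_nil]
  · rw [S_ge k hk (sha k a) _ _ (by omega), mu_append, mu_flatten,
      ← ih (m - k) (by omega) (by omega), show m - k + 1 = m + 1 - k by omega]
    congr 2
    refine List.map_congr_left fun j hj => ?_
    have hj := List.mem_range.1 hj
    rw [mu_pw, shd, if_neg (by omega), ← ih (m - 1 - j) (by omega) (by omega),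
      show m - 1 - j + 1 = m + 1 - 1 - j by omega,
      show m + 1 - k - j + 1 = m + 1 + 1 - k - j by omega]

theorem s_shift {k : ℕ} {a : ℕ → α} {d : ℕ → ℕ} (h : Good k a d) (n : ℕ) :
    s k a d (n + 1) = mu (a 1) (d 1) (s k (sha k a) (shd d) n) := by
  have hk := h.hk
  rw [s, s, ← S_shift h _ (by omega), show n + 1 + (k - 1) = n + (k - 1) + 1 by omega]

theorem D_shift {k : ℕ} {a : ℕ → α} {d : ℕ → ℕ} (h : Good k a d) (n : ℕ) :
    D k a d (n + 1) = th (a 1) (d 1) (D k (sha k a) (shd d) n) := by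
  rw [th_eq, D, D, mu_append, mu_flatten, mu_pw, ← s_shift h, shd, if_neg (by omega),
    List.range_succ, List.map_append, List.flatten_append]
  simp only [List.map_cons, List.map_nil, List.flatten_cons, List.flatten_nil, List.append_nil]
  rw [show n + 1 - 1 - n = 0 by omega, show n + 1 - n = 1 by omega, s_zero k h.hk,
    pw_singleton, List.append_assoc]
  congr 3
  refine List.map_congr_left fun j hj => ?_
  have hj := List.mem_range.1 hj
  rw [mu_pw, ← s_shift h, shd, if_neg (by omega), show n - 1 - j + 1 = n + 1 - 1 - j by omega,
    show n - j + 1 = n + 1 - j by omega]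

end Shift

/-! ### Prefix relations between the words `s_n` -/

theorem s_succ_decomp {k : ℕ} {a : ℕ → α} {d : ℕ → ℕ} (h : Good k a d) (n : ℕ) :
    s k a d (n + 1) = s k a d n ++ (pw (s k a d n) (d (n + 1) - 1) ++
      (((List.range (k - 2)).map
          (fun j => pw (S k a d (n + (k - 1) - 1 - j)) (d (n - j)))).flatten ++
        S k a d (n + (k - 1) + 1 - k))) := by
  have hk := h.hk
  have hd := h.hd (n + 1) (by omega)
  obtain ⟨e, he⟩ : ∃ e, d (n + 1) = e + 1 := ⟨d (n + 1) - 1, by omega⟩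
  rw [s, show n + 1 + (k - 1) = n + (k - 1) + 1 by omega, S_ge k hk _ _ _ (by omega),
    show k - 1 = (k - 2) + 1 by omega, List.range_succ_eq_map, List.map_cons, List.flatten_cons,
    List.map_map]
  have e1 : n + (k - 2 + 1) + 1 + 1 - k - 0 = n + 1 := by omega
  have e2 : n + (k - 2 + 1) + 1 - 1 - 0 = n + (k - 1) := by omega
  rw [e1, e2, he, pw, ← s]
  simp only [List.append_assoc, Nat.add_sub_cancel]
  congr 4
  refine List.map_congr_left fun j _ => ?_
  simp only [Function.comp]
  rw [show n + (k - 2 + 1) - (j + 1) = n + (k - 2 + 1) - 1 - j by omega,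
    show n + (k - 2 + 1) + 1 + 1 - k - (j + 1) = n - j by omega]

theorem s_prefix_succ {k : ℕ} {a : ℕ → α} {d : ℕ → ℕ} (h : Good k a d) (n : ℕ) :
    s k a d n <+: s k a d (n + 1) := by
  rw [s_succ_decomp h]
  exact List.prefix_append _ _

theorem head_s {k : ℕ} {a : ℕ → α} {d : ℕ → ℕ} (h : Good k a d) (n : ℕ) :
    [a 1] <+: s k a d n := by
  induction n with
  | zero => rw [s_zero k h.hk]
  | succ n ih => exact ih.trans (s_prefix_succ h n)

theorem s_snoc_prefix {k : ℕ} {a : ℕ → α} {d : ℕ → ℕ} (h : Good k a d) (n : ℕ)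
    (hn : k ≤ n + 1) : s k a d n ++ [a 1] <+: s k a d (n + 1) := by
  have hk := h.hk
  have hS : ∀ m, k - 1 ≤ m → [a 1] <+: S k a d m := by
    intro m hm
    have := head_s h (m - (k - 1))
    rwa [s, show m - (k - 1) + (k - 1) = m by omega] at this
  rw [s_succ_decomp h, List.prefix_append_right_inj]
  refine prefix_pw _ _ _ (head_s h n) (prefix_flatten _ _ (hS _ (by omega)) _ _ _ ?_) _
  intro j hj
  have := List.mem_range.1 hj
  exact hS _ (by omega)

/-- Every factor of the infinite word lies in `s_N` for a positive `N`. -/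
theorem FactorS.exists_succ {k : ℕ} {a : ℕ → α} {d : ℕ → ℕ} (h : Good k a d) {w : List α}
    (hw : FactorS k a d w) : ∃ N, w <:+: s k a d (N + 1) := by
  obtain ⟨N, hN⟩ := hw
  exact ⟨N, hN.trans (s_prefix_succ h N).isInfix⟩

/-- Every factor lies in some `s_N` that is followed by `a_1`. -/
theorem FactorS.exists_snoc {k : ℕ} {a : ℕ → α} {d : ℕ → ℕ} (h : Good k a d) {w : List α}
    (hw : FactorS k a d w) : ∃ N, w <:+: s k a d N ∧ s k a d N ++ [a 1] <+: s k a d (N + 1) := by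
  obtain ⟨N, hN⟩ := hw
  have mono : ∀ r, s k a d N <+: s k a d (N + r) := by
    intro r
    induction r with
    | zero => exact List.prefix_rfl
    | succ r ih => exact ih.trans (s_prefix_succ h _)
  exact ⟨N + k, hN.trans (mono k).isInfix, s_snoc_prefix h _ (by omega)⟩

/-- The final letter of `s_n` for `n < k` is `a_{n+1}`. -/
theorem s_last {k : ℕ} {a : ℕ → α} {d : ℕ → ℕ} (h : Good k a d) (n : ℕ) (hn : n < k) :
    [a (n + 1)] <:+ s k a d n := by
  have hk := h.hk
  rcases n with _ | n
  · rw [s_zero k hk]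
  · rw [s, S_ge k hk _ _ _ (by omega), S_lt _ _ _ (n + 1 + (k - 1) - k) (by omega),
      show n + 1 + (k - 1) - k = n by omega, Nat.mod_eq_of_lt (by omega)]
    exact List.suffix_append _ _

/-! ### Induction along the shift -/

section Main
variable [DecidableEq α]

theorem th_factor {k : ℕ} {a : ℕ → α} {d : ℕ → ℕ} (h : Good k a d) {w : List α}
    (hw : FactorS k (sha k a) (shd d) w) : FactorS k a d (th (a 1) (d 1) w) := by
  have hk := h.hk
  obtain ⟨N, hN, hN'⟩ := hw.exists_snoc h.shift
  refine ⟨N + 2, (th_infix _ _ hN).trans ?_⟩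
  obtain ⟨r, hr⟩ := hN'
  have hne : a 2 ≠ a 1 := fun e => by
    have := h.ha _ _ (by omega) (by omega) (by omega) (by omega) e
    omega
  rw [s_shift h, ← hr, mu_append, mu_append, sha_lt _ _ _ (by omega), mu_ne _ _ hne, th_eq]
  exact ⟨[], [a (1 + 1)] ++ mu (a 1) (d 1) r, by simp⟩

theorem run_zero {k : ℕ} {a : ℕ → α} {d : ℕ → ℕ} (h : Good k a d) :
    s k a d 0 ++ s k a d 0 ++ D k a d 0 = th (a 1) (d 1) [a 1] := by
  have := h.hd 1 le_rfl
  rw [D, th_eq, mu_self, s_zero k h.hk, pw_singleton]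
  obtain ⟨e, he⟩ : ∃ e, d 1 = e + 1 := ⟨d 1 - 1, by omega⟩
  simp [he, List.replicate_succ]

theorem run_succ {k : ℕ} {a : ℕ → α} {d : ℕ → ℕ} (h : Good k a d) (n : ℕ) :
    s k a d (n + 1) ++ s k a d (n + 1) ++ D k a d (n + 1) =
      th (a 1) (d 1) (s k (sha k a) (shd d) n ++ s k (sha k a) (shd d) n ++
        D k (sha k a) (shd d) n) := by
  rw [D_shift h, s_shift h, th_eq, th_eq, mu_append, mu_append]
  simp

theorem run_factor (n : ℕ) : ∀ {k : ℕ} {a : ℕ → α} {d : ℕ → ℕ}, Good k a d →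
    FactorS k a d (s k a d n ++ s k a d n ++ D k a d n) := by
  induction n with
  | zero =>
    intro k a d h
    have hk := h.hk
    rw [run_zero h]
    refine th_factor h ⟨k - 1, ?_⟩
    have := (s_last h.shift (k - 1) (by omega)).isInfix
    rwa [show k - 1 + 1 = k by omega, sha_self] at this
  | succ n ih =>
    intro k a d h
    rw [run_succ h]
    exact th_factor h (ih h.shift)

theorem run_periodic (n : ℕ) : ∀ {k : ℕ} {a : ℕ → α} {d : ℕ → ℕ}, Good k a d →
    ∃ m, s k a d n ++ s k a d n ++ D k a d n <:+: pw (s k a d n) m := by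
  induction n with
  | zero =>
    intro k a d h
    refine ⟨d 1 + 1, ?_⟩
    rw [run_zero h, th_eq, mu_self, s_zero k h.hk, pw_singleton, List.replicate_succ]
    exact List.infix_rfl
  | succ n ih =>
    intro k a d h
    have hk := h.hk
    obtain ⟨m, hm⟩ := ih h.shift
    refine ⟨m + 1, ?_⟩
    rw [run_succ h]
    refine (th_infix _ _ hm).trans ?_
    have hne : a 2 ≠ a 1 := fun e => by
      have := h.ha _ _ (by omega) (by omega) (by omega) (by omega) e
      omega
    obtain ⟨r, hr⟩ := head_s h.shift n
    have hs : s k a d (n + 1) = List.replicate (d 1) (a 1) ++ ([a 2] ++ mu (a 1) (d 1) r) := by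
      rw [s_shift h, ← hr, mu_append, sha_lt _ _ _ (by omega), mu_ne _ _ hne, List.append_assoc]
    have hp : pw (s k a d (n + 1)) 1 = s k a d (n + 1) := by simp [pw]
    rw [pw_append, hp, th_eq, mu_pw, ← s_shift h]
    nth_rewrite 3 [hs]
    rw [← List.append_assoc]
    exact (List.prefix_append _ _).isInfix

/-- The letter `a_1` is isolated in the word built from the shifted data. -/
theorem no_square_shift {k : ℕ} {a : ℕ → α} {d : ℕ → ℕ} (h : Good k a d) :
    ¬ FactorS k (sha k a) (shd d) [a 1, a 1] := by
  intro hw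
  have hk := h.hk
  obtain ⟨N, hN⟩ := hw.exists_succ h.shift
  have hd := h.shift.hd 1 le_rfl
  obtain ⟨e, he⟩ : ∃ e, shd d 1 = e + 1 := ⟨shd d 1 - 1, by omega⟩
  rw [s_shift h.shift, he, mu, sha_lt _ _ _ (by omega)] at hN
  refine no_square _ _ (fun e => ?_) _ hN
  have := h.ha _ _ (by omega) (by omega) (by omega) (by omega) e
  omega

/-- Every common factor of the infinite word and of `s_n^ω` is a factor of the single word
`s_n s_n D_n`. Unlike the bound on lengths, this passes through the morphisms. -/
theorem common_factor (n : ℕ) : ∀ {k : ℕ} {a : ℕ → α} {d : ℕ → ℕ}, Good k a d →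
    ∀ w, FactorS k a d w → (∃ m, w <:+: pw (s k a d n) m) →
      w <:+: s k a d n ++ s k a d n ++ D k a d n := by
  induction n with
  | zero =>
    rintro k a d h w hw ⟨m, hm⟩
    obtain ⟨N, hN⟩ := hw.exists_succ h
    rw [s_zero k h.hk, pw_singleton] at hm
    have hx : w <:+: th (a 1) (d 1) (s k (sha k a) (shd d) N) := by
      rw [s_shift h] at hN
      rw [th_eq]
      exact hN.trans (List.prefix_append _ _).isInfix
    have hy : w <:+: th (a 1) (d 1) (List.replicate m (a 1)) := by
      rw [th_eq, mu_replicate]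
      exact hm.trans (List.prefix_append _ _).isInfix
    obtain ⟨v, h1, h2, h3⟩ := th_desub _ _ _ _ _ hx hy
    rw [run_zero h]
    refine h3.trans (th_infix _ _ ?_)
    have hv : v = List.replicate v.length (a 1) :=
      List.eq_replicate_iff.2 ⟨rfl, fun b hb => List.eq_of_mem_replicate (h2.subset hb)⟩
    rcases hl : v.length with _ | _ | l
    · rw [List.length_eq_zero_iff.1 hl]; exact List.nil_infix
    · rw [hv, hl]; exact List.infix_rfl
    · exfalso
      refine no_square_shift h ⟨N, List.IsInfix.trans ?_ h1⟩
      rw [hv, hl]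
      exact ⟨[], List.replicate l (a 1), by simp [List.replicate_succ]⟩
  | succ n ih =>
    rintro k a d h w hw ⟨m, hm⟩
    obtain ⟨N, hN⟩ := hw.exists_succ h
    rw [s_shift h] at hN
    rw [s_shift h, ← mu_pw] at hm
    have hx : w <:+: th (a 1) (d 1) (s k (sha k a) (shd d) N) := by
      rw [th_eq]
      exact hN.trans (List.prefix_append _ _).isInfix
    have hy : w <:+: th (a 1) (d 1) (pw (s k (sha k a) (shd d) n) m) := by
      rw [th_eq]
      exact hm.trans (List.prefix_append _ _).isInfix
    obtain ⟨v, h1, h2, h3⟩ := th_desub _ _ _ _ _ hx hy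
    rw [run_succ h]
    exact h3.trans (th_infix _ _ (ih h.shift v ⟨N, h1⟩ ⟨m, h2⟩))

end Main

theorem stmt11 {α : Type*} (k : ℕ) (hk : 2 ≤ k) (a : ℕ → α)
    (ha : ∀ i j, 1 ≤ i → i ≤ k → 1 ≤ j → j ≤ k → a i = a j → i = j)
    (d : ℕ → ℕ) (hd0 : d 0 = 0) (hd : ∀ i, 1 ≤ i → 1 ≤ d i) (n : ℕ) (hn : 1 ≤ n) :
    FactorS k a d (s k a d n ++ s k a d n ++ D k a d n) ∧
    (∃ m, s k a d n ++ s k a d n ++ D k a d n <:+: pw (s k a d n) m) ∧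
    (∀ w : List α, FactorS k a d w → (∃ m, w <:+: pw (s k a d n) m) →
        w.length ≤ 2 * (s k a d n).length + (D k a d n).length) := by
  classical
  have h : Good k a d := ⟨hk, ha, hd0, hd⟩
  refine ⟨run_factor n h, run_periodic n h, fun w hw hm => ?_⟩
  have := (common_factor n h w hw hm).length_le
  simp only [List.length_append] at this
  omega

end Epi
end

section
/- For every n ≥ 1 and every word u over A with |u| = |s_n|: the square u·u is a factor of 𝐬 if and only if u = C_j(s_n) for some j with 0 ≤ j ≤ |s_n| - 1, i.e. if and only if u is a conjugate of s_n. -/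
/-!
The word `𝐬` is the image, under the morphism `M n = ψ_{a_1}^{d_1} ∘ ⋯ ∘ ψ_{a_n}^{d_n}`, of a word
in which the letter `A = a_{n+1}` separates all others, and `s_n = M n A` (`s_eq_M`). With
`P = Pal n = s_{n-1}^{d_n} ⋯ s_0^{d_1}`, every letter `x` satisfies:

* `M n x` ends with `x`;
* `M n x ++ P` starts with `P ++ [x]` (`Pal_prefix`);
* `|M n x| ≤ |P| + 1` (`length_M_le`).

Put `q = |s_n|` and consider a stretch `s_n^f (M n x)`, `f ≥ 1`, `x ≠ A`, followed by `s_n`. The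
period `q` breaks at the position following the prefix `s_n^{f-1} P`, where the letter is `A` while
`q` places further on it is `x`. It also breaks at the last letter `x` of `M n x`, since the letter
`q` places further on is the last letter `A` of the next `s_n`. As `|M n x| ≤ |P| + 1`, fewer than
`q` positions lie strictly between these two, so a square `uu` with `|u| = q`, which needs `q`
consecutive positions without a break, lies inside a run `s_n^f P` (`square_split`). Such a run is a
prefix of a power of `s_n`, hence `u` is a conjugate of `s_n`.

Conversely `s_n s_n P` is a factor of `𝐬` (`exists_cube_infix`), `P` is a prefix of `s_n P`, and
`|P| ≥ q - 1`. So the square of every conjugate of `s_n` occurs in `s_n s_n P`.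
-/

namespace Epi

variable {α : Type*}

/-! ### Powers, runs and squares of words -/

section Words

variable {α : Type*}

lemma length_pw (w : List α) (p : ℕ) : (pw w p).length = p * w.length := by
  induction p with
  | zero => simp [pw]
  | succ p ih => simp [pw, ih]; ring

lemma pw_add (w : List α) (p q : ℕ) : pw w (p + q) = pw w p ++ pw w q := by
  induction p with
  | zero => simp [pw]
  | succ p ih => rw [Nat.add_right_comm]; simp [pw, ih]

lemma pw_succ' (w : List α) (p : ℕ) : pw w (p + 1) = pw w p ++ w := by
  rw [pw_add]; simp [pw]

lemma prefix_pw_s12 (w : List α) {p : ℕ} (hp : 1 ≤ p) : w <+: pw w p := by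
  obtain ⟨p, rfl⟩ := Nat.exists_eq_add_of_le' hp
  exact ⟨pw w p, rfl⟩

lemma pw_flatMap {β : Type*} (f : β → List α) (v : List β) (p : ℕ) :
    pw (v.flatMap f) p = (pw v p).flatMap f := by
  induction p with
  | zero => simp [pw]
  | succ p ih => simp [pw, ih]

lemma prefix_pw_append {w p : List α} (h : p <+: w ++ p) (e : ℕ) : p <+: pw w e ++ p := by
  induction e with
  | zero => simp [pw]
  | succ e ih =>
    refine h.trans ?_
    simp only [pw, List.append_assoc]
    exact (List.prefix_append_right_inj w).2 ih

/-- A factor of a power of `w` having the length of `w` is a conjugate of `w`. -/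
lemma conj_of_infix_pw (w u : List α) (hw : 0 < w.length) (hu : u.length = w.length) (e : ℕ)
    (h : u <:+: pw w e) : ∃ j, j < w.length ∧ u = w.drop j ++ w.take j := by
  induction e with
  | zero =>
    have := h.length_le
    simp [pw] at this
    simp [this] at hu
    omega
  | succ e ih =>
    obtain ⟨l, r, hlr⟩ := h
    by_cases hl : w.length ≤ l.length
    · obtain ⟨l', rfl⟩ : w <+: l :=
        List.prefix_of_prefix_length_le ⟨_, rfl⟩ ⟨u ++ r, by rw [← List.append_assoc, hlr]; rfl⟩ hl
      apply ih
      refine ⟨l', r, ?_⟩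
      simp only [pw, List.append_assoc, List.append_cancel_left_eq] at hlr
      simpa using hlr
    · push Not at hl
      refine ⟨l.length, hl, ?_⟩
      have hlw : l <+: w :=
        List.prefix_of_prefix_length_le (l₃ := pw w (e + 1))
          ⟨u ++ r, by rw [← List.append_assoc, hlr]⟩ ⟨_, rfl⟩ hl.le
      obtain ⟨y, rfl⟩ := hlw
      simp only [List.drop_left, List.take_left]
      have hur : u ++ r = y ++ pw (l ++ y) e := by
        simpa [pw] using hlr
      have hlen := congrArg List.length hur
      simp [length_pw] at hlen hu
      rcases e with _ | e
      · have : l = [] := List.length_eq_zero_iff.1 (by omega)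
        subst this
        simp [pw] at hur ⊢
        have : r = [] := List.length_eq_zero_iff.1 (by simp at hu hlen; omega)
        simpa [this] using hur
      · have h1 : u <+: y ++ pw (l ++ y) (e + 1) := ⟨r, hur⟩
        have h2 : y ++ l <+: y ++ pw (l ++ y) (e + 1) := ⟨y ++ pw (l ++ y) e, by simp [pw]⟩
        have h3 : u <+: y ++ l :=
          List.prefix_of_prefix_length_le h1 h2 (by simp; omega)
        exact h3.eq_of_length (by simp; omega)

/-- The combinatorial heart of the argument. In `Y^f X Z`, a square `uu` with `|u| = |Y|` lies in
the run `Y^f P` or in `Z`: any other placement forces `A = x`, because of the position just after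
the first `P` of `Y P`, or because of the last position of `X`. -/
lemma square_split {Y X Z P X₀ u : List α} {A x : α} (hAx : x ≠ A) {f : ℕ} (hf : 1 ≤ f)
    (hYP : P ++ [A] <+: Y ++ P) (hXZ : P ++ [x] <+: X ++ Z) (hX : X = X₀ ++ [x])
    (hZ : ∀ b, Z[Y.length - 1]? = some b → b = A)
    (hXP : X.length ≤ P.length + 1) (hY : 0 < Y.length) (hu : u.length = Y.length)
    (h : u ++ u <:+: pw Y f ++ X ++ Z) :
    u ++ u <:+: pw Y f ++ P ∨ u ++ u <:+: Z := by
  obtain ⟨L, R, hLR⟩ := h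
  obtain ⟨g, rfl⟩ := Nat.exists_eq_add_of_le' hf
  by_cases c1 : (pw Y (g + 1) ++ X).length ≤ L.length
  · right
    obtain ⟨L', rfl⟩ : pw Y (g + 1) ++ X <+: L :=
      List.prefix_of_prefix_length_le ⟨_, rfl⟩
        ⟨u ++ u ++ R, by rw [← List.append_assoc, hLR]⟩ c1
    refine ⟨L', R, ?_⟩
    simpa using hLR
  by_cases c2 : (L ++ (u ++ u)).length ≤ (pw Y (g + 1) ++ P).length
  · left
    have hP : P <+: X ++ Z := (List.prefix_append P [x]).trans hXZ
    have h2 : pw Y (g + 1) ++ P <+: pw Y (g + 1) ++ X ++ Z := by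
      rw [List.append_assoc]; exact (List.prefix_append_right_inj _).2 hP
    have h3 : L ++ (u ++ u) <+: pw Y (g + 1) ++ P :=
      List.prefix_of_prefix_length_le ⟨R, hLR⟩ h2 c2
    exact (List.suffix_append L (u ++ u)).isInfix.trans h3.isInfix
  exfalso
  push Not at c1 c2
  set W := pw Y (g + 1) ++ X ++ Z with hW
  have per : ∀ i, L.length ≤ i → i < L.length + Y.length → W[i]? = W[i + Y.length]? := by
    intro i hi1 hi2
    obtain ⟨m, rfl⟩ := Nat.exists_eq_add_of_le hi1
    have e1 : W[L.length + m]? = u[m]? := by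
      rw [← hLR, List.append_assoc, List.append_assoc, List.getElem?_append_right (by omega),
        Nat.add_sub_cancel_left, List.getElem?_append_left (by omega)]
    have e2 : W[L.length + m + Y.length]? = u[m]? := by
      rw [← hLR, List.append_assoc, List.append_assoc, List.getElem?_append_right (by omega),
        List.getElem?_append_right (by omega), List.getElem?_append_left (by omega)]
      congr 1
      omega
    rw [e1, e2]
  simp only [List.length_append, length_pw] at c1 c2
  have hWlen : L.length + 2 * Y.length ≤ W.length := by
    rw [← hLR]; simp; omega
  obtain ⟨R1, hR1⟩ := hYP
  obtain ⟨R2, hR2⟩ := hXZ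
  have hgY : (g + 1) * Y.length = g * Y.length + Y.length := by ring
  by_cases c3 : L.length ≤ g * Y.length + P.length
  · have hb1 : W[g * Y.length + P.length]? = some A := by
      have : W = (pw Y g ++ P) ++ A :: (R1 ++ x :: R2) := by
        have : X ++ Z = P ++ x :: R2 := by rw [← hR2]; simp
        rw [hW, pw_succ', List.append_assoc, this]
        have : Y ++ (P ++ x :: R2) = P ++ A :: (R1 ++ x :: R2) := by
          rw [← List.append_assoc, ← hR1]; simp
        simp [this]
      rw [this, List.getElem?_append_right (by simp [length_pw])]
      simp [length_pw]
    have hb2 : W[g * Y.length + P.length + Y.length]? = some x := by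
      have : W = (pw Y (g + 1) ++ P) ++ x :: R2 := by
        rw [hW, List.append_assoc, ← hR2]; simp
      rw [this, List.getElem?_append_right (by simp [length_pw]; omega)]
      simp only [List.length_append, length_pw]
      rw [show g * Y.length + P.length + Y.length - ((g + 1) * Y.length + P.length) = 0 by omega]
      rfl
    have := per _ c3 (by omega)
    rw [hb1, hb2] at this
    exact hAx (Option.some.inj this).symm
  · push Not at c3
    have hXl : X.length = X₀.length + 1 := by simp [hX]
    have hW' : W = (pw Y (g + 1) ++ X₀) ++ x :: Z := by rw [hW, hX]; simp
    have hb1 : W[(g + 1) * Y.length + X₀.length]? = some x := by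
      rw [hW', List.getElem?_append_right (by simp [length_pw])]
      simp [length_pw]
    have hb2 : W[(g + 1) * Y.length + X₀.length + Y.length]? = Z[Y.length - 1]? := by
      rw [hW, List.getElem?_append_right (by simp [length_pw]; omega)]
      simp only [List.length_append, length_pw]
      congr 1
      omega
    have := per _ (by omega : L.length ≤ (g + 1) * Y.length + X₀.length) (by omega)
    rw [hb1, hb2] at this
    exact hAx (hZ _ this.symm)

end Words

/-! ### The morphisms `M n` and the common prefixes `Pal n` -/

section Blocks

variable {α : Type*}

/-- The separating letter of level `n`, i.e. the letter `a_{n+1}` with indices read modulo `k`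
in `{1, …, k}`. -/
def sep (k : ℕ) (a : ℕ → α) (n : ℕ) : α := a (n % k + 1)

open Classical in
/-- `M k a d n` is the morphism `ψ_{a_1}^{d_1} ∘ ⋯ ∘ ψ_{a_n}^{d_n}` on letters, where `ψ_c` fixes
`c` and sends every other letter `x` to `cx`. -/
noncomputable def M (k : ℕ) (a : ℕ → α) (d : ℕ → ℕ) : ℕ → α → List α
  | 0, x => [x]
  | n + 1, x =>
    if x = sep k a n then M k a d n x
    else pw (M k a d n (sep k a n)) (d (n + 1)) ++ M k a d n x

/-- `Pal k a d n` is the palindromic prefix `s_{n-1}^{d_n} ⋯ s_1^{d_2} s_0^{d_1}` of `𝐬`. -/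
noncomputable def Pal (k : ℕ) (a : ℕ → α) (d : ℕ → ℕ) : ℕ → List α
  | 0 => []
  | n + 1 => pw (M k a d n (sep k a n)) (d (n + 1)) ++ Pal k a d n

variable (k : ℕ) (a : ℕ → α) (d : ℕ → ℕ)

lemma M_succ_sep (n : ℕ) : M k a d (n + 1) (sep k a n) = M k a d n (sep k a n) := by
  simp [M]

lemma M_succ_ne (n : ℕ) {x : α} (h : x ≠ sep k a n) :
    M k a d (n + 1) x = pw (M k a d n (sep k a n)) (d (n + 1)) ++ M k a d n x := by
  simp [M, h]

lemma suffix_M (n i : ℕ) (x : α) : M k a d n x <:+ M k a d (n + i) x := by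
  induction i with
  | zero => exact List.suffix_rfl
  | succ i ih =>
    rw [← Nat.add_assoc]
    by_cases h : x = sep k a (n + i)
    · subst h; rwa [M_succ_sep]
    · rw [M_succ_ne _ _ _ _ h]; exact ih.trans (List.suffix_append _ _)

lemma singleton_suffix_M (n : ℕ) (x : α) : [x] <:+ M k a d n x := by
  simpa [M] using suffix_M k a d 0 n x

lemma length_M_pos (n : ℕ) (x : α) : 0 < (M k a d n x).length := by
  have := (singleton_suffix_M k a d n x).length_le
  simp only [List.length_singleton] at this
  omega

/-- The first letter after the common prefix `Pal n` in an image under the morphism `M n` reveals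
the first letter of the preimage. -/
lemma Pal_prefix (n : ℕ) (x : α) : Pal k a d n ++ [x] <+: M k a d n x ++ Pal k a d n := by
  induction n generalizing x with
  | zero => simp [Pal, M]
  | succ n ih =>
    by_cases h : x = sep k a n
    · subst h
      rw [M_succ_sep]
      simp only [Pal]
      have hc : M k a d n (sep k a n) ++ pw (M k a d n (sep k a n)) (d (n + 1)) =
          pw (M k a d n (sep k a n)) (d (n + 1)) ++ M k a d n (sep k a n) := by
        rw [← pw_succ']; rfl
      rw [← List.append_assoc (M k a d n (sep k a n)), hc, List.append_assoc, List.append_assoc]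
      exact (List.prefix_append_right_inj _).2 (ih _)
    · rw [M_succ_ne _ _ _ _ h]
      simp only [Pal]
      rw [List.append_assoc, List.append_assoc]
      refine (List.prefix_append_right_inj _).2 ((ih x).trans ?_)
      refine (List.prefix_append_right_inj _).2 (prefix_pw_append ?_ _)
      exact (List.prefix_append _ _).trans (ih _)

lemma Pal_prefix' (n : ℕ) (x : α) : Pal k a d n <+: M k a d n x ++ Pal k a d n :=
  (List.prefix_append _ _).trans (Pal_prefix k a d n x)

lemma length_M_le (n : ℕ) (x : α) : (M k a d n x).length ≤ (Pal k a d n).length + 1 := by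
  induction n generalizing x with
  | zero => simp [Pal, M]
  | succ n ih =>
    by_cases h : x = sep k a n
    · subst h
      rw [M_succ_sep]
      have := ih (sep k a n)
      simp [Pal]; omega
    · rw [M_succ_ne _ _ _ _ h]
      have := ih x
      simp [Pal]; omega

lemma Pal_prefix_flatMap (n : ℕ) (v : List α) :
    Pal k a d n <+: v.flatMap (M k a d n) ++ Pal k a d n := by
  induction v with
  | nil => simp
  | cons x v ih =>
    refine (Pal_prefix' k a d n x).trans ?_
    rw [List.flatMap_cons, List.append_assoc]
    exact (List.prefix_append_right_inj _).2 ih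

lemma M_eq_flatMap (n i : ℕ) (x : α) :
    ∃ v : List α, M k a d (n + i) x = v.flatMap (M k a d n) := by
  induction i generalizing x with
  | zero => exact ⟨[x], by simp⟩
  | succ i ih =>
    rw [← Nat.add_assoc]
    by_cases h : x = sep k a (n + i)
    · subst h; rw [M_succ_sep]; exact ih _
    · rw [M_succ_ne _ _ _ _ h]
      obtain ⟨v, hv⟩ := ih x
      obtain ⟨w, hw⟩ := ih (sep k a (n + i))
      exact ⟨pw w (d (n + i + 1)) ++ v, by rw [hv, hw, pw_flatMap, List.flatMap_append]⟩

variable {d}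

lemma M_sep_prefix (hd : ∀ i, 1 ≤ i → 1 ≤ d i) (n : ℕ) (x : α) :
    M k a d n (sep k a n) <+: M k a d (n + 1) x := by
  by_cases h : x = sep k a n
  · rw [h, M_succ_sep]
  · rw [M_succ_ne _ _ _ _ h]
    exact (prefix_pw_s12 _ (hd _ (by omega))).trans (List.prefix_append _ _)

/-- A square `uu` with `|u| = |s_n|` inside an image under `M (n + 1)` is trapped in a power
of `s_n`. -/
lemma infix_pw_of_square (hd : ∀ i, 1 ≤ i → 1 ≤ d i) (n : ℕ) (u : List α)
    (hu : u.length = (M k a d n (sep k a n)).length) (v : List α) (e : ℕ)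
    (h : u ++ u <:+: pw (M k a d n (sep k a n)) e ++
      (v.flatMap (M k a d (n + 1)) ++ Pal k a d n)) :
    ∃ E, u <:+: pw (M k a d n (sep k a n)) E := by
  set A := sep k a n with hA
  set Y := M k a d n A with hY
  have hYpos : 0 < Y.length := length_M_pos ..
  have run : ∀ e, u ++ u <:+: pw Y e ++ Pal k a d n → ∃ E, u <:+: pw Y E := by
    intro e he
    refine ⟨e + (Pal k a d n).length, (List.prefix_append u u).isInfix.trans (he.trans ?_)⟩
    rw [pw_add]
    refine ((List.prefix_append_right_inj _).2 ?_).isInfix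
    refine List.prefix_of_prefix_length_le
      (prefix_pw_append (Pal_prefix' k a d n A) (Pal k a d n).length) (List.prefix_append _ _) ?_
    rw [length_pw]
    exact Nat.le_mul_of_pos_right _ hYpos
  induction v generalizing e with
  | nil => exact run e (by simpa using h)
  | cons x v ih =>
    by_cases hx : x = A
    · subst hx
      apply ih (e + 1)
      rw [pw_succ']
      rw [List.flatMap_cons, M_succ_sep] at h
      simpa using h
    · rw [List.flatMap_cons, M_succ_ne _ _ _ _ hx, ← hA, ← hY] at h
      obtain ⟨X₀, hX₀⟩ := singleton_suffix_M k a d n x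
      have hlast : Y[Y.length - 1]? = some A := by
        obtain ⟨Y₀, hY₀⟩ := singleton_suffix_M k a d n A
        rw [hY, ← hY₀]; simp
      have key := square_split (Y := Y) (X := M k a d n x)
        (Z := v.flatMap (M k a d (n + 1)) ++ Pal k a d n) (P := Pal k a d n) (X₀ := X₀)
        (u := u) (A := A) (x := x) hx (f := e + d (n + 1))
        (by have := hd (n + 1) (by omega); omega)
        (Pal_prefix k a d n A) ?_ hX₀.symm ?_ (length_M_le ..) hYpos hu ?_
      · rcases key with h1 | h1
        · exact run _ h1
        · exact ih 0 (by simpa [pw] using h1)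
      · refine (Pal_prefix k a d n x).trans ((List.prefix_append_right_inj _).2 ?_)
        -- an image under `M (n + 1)` is in particular an image under `M n`
        have hc : ∀ v : List α, ∃ w : List α,
            v.flatMap (M k a d (n + 1)) = w.flatMap (M k a d n) := by
          intro v
          induction v with
          | nil => exact ⟨[], rfl⟩
          | cons y v ih2 =>
            obtain ⟨w, hw⟩ := ih2
            obtain ⟨w', hw'⟩ := M_eq_flatMap k a d n 1 y
            exact ⟨w' ++ w, by rw [List.flatMap_cons, hw, hw', List.flatMap_append]⟩
        obtain ⟨w, hw⟩ := hc v
        rw [hw]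
        exact Pal_prefix_flatMap ..
      · intro b hb
        cases v with
        | nil =>
          -- here `Z = Pal n` may be shorter than `Y`, and it is a prefix of `Y ++ Pal n`
          obtain ⟨T, hT⟩ := Pal_prefix' k a d n A
          simp only [List.flatMap_nil, List.nil_append] at hb
          have hlt := (List.getElem?_eq_some_iff.1 hb).1
          have : (Y ++ Pal k a d n)[Y.length - 1]? = some b := by
            rw [hY, ← hT, List.getElem?_append_left hlt, ← hb]
          rw [List.getElem?_append_left (by omega), hlast] at this
          exact (Option.some.inj this).symm
        | cons y v =>
          obtain ⟨T, hT⟩ := M_sep_prefix k a hd n y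
          rw [List.flatMap_cons, ← hT, List.append_assoc, List.append_assoc,
            List.getElem?_append_left (by rw [← hA, ← hY]; omega), ← hA, ← hY, hlast] at hb
          exact (Option.some.inj hb).symm
      · rw [pw_add]
        simpa using h

/-! ### The words `s_n` as images of letters -/

variable {k a}

lemma sep_ne (ha : ∀ i j, 1 ≤ i → i ≤ k → 1 ≤ j → j ≤ k → a i = a j → i = j)
    {m n : ℕ} (h1 : m < n) (h2 : n < m + k) : sep k a n ≠ sep k a m := by
  intro h
  have hk : 0 < k := by omega
  have e := ha _ _ (by omega) (Nat.mod_lt n hk) (by omega) (Nat.mod_lt m hk) h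
  have e2 : m ≡ n [MOD k] := by unfold Nat.ModEq; omega
  have := Nat.le_of_dvd (by omega) ((Nat.modEq_iff_dvd' h1.le).1 e2)
  omega

/-- Unfolding the recursion of `M` for the letter `sep N` over `i < k` levels. Once level `0` is
reached the exponents `d (N - j) = d 0` vanish. -/
lemma M_unfold (ha : ∀ i j, 1 ≤ i → i ≤ k → 1 ≤ j → j ≤ k → a i = a j → i = j)
    (hd0 : d 0 = 0) (N i : ℕ) (hi : i + 1 ≤ k) :
    M k a d N (sep k a N) =
      ((List.range i).map (fun j => pw (M k a d (N - 1 - j) (sep k a (N - 1 - j)))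
        (d (N - j)))).flatten ++ M k a d (N - i) (sep k a N) := by
  induction i with
  | zero => simp
  | succ i ih =>
    rw [ih (by omega), List.range_succ]
    simp only [List.map_append, List.flatten_append, List.append_assoc, List.map_cons,
      List.map_nil, List.flatten_cons, List.flatten_nil, List.append_nil]
    congr 1
    by_cases h : N ≤ i
    · rw [Nat.sub_eq_zero_of_le h, Nat.sub_eq_zero_of_le (by omega : N ≤ i + 1), hd0]
      simp [pw]
    · obtain ⟨m, hm⟩ : ∃ m, N = m + i + 1 := ⟨N - i - 1, by omega⟩
      have h1 : N - i = m + 1 := by omega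
      have h2 : N - 1 - i = m := by omega
      have h3 : N - (i + 1) = m := by omega
      rw [h1, h2, h3]
      exact M_succ_ne _ _ _ _ (sep_ne ha (by omega) (by omega))

/-- The word `s_N` is the image of the separating letter under `M N`. -/
lemma s_eq_M (hk : 2 ≤ k) (ha : ∀ i j, 1 ≤ i → i ≤ k → 1 ≤ j → j ≤ k → a i = a j → i = j)
    (hd0 : d 0 = 0) (N : ℕ) : s k a d N = M k a d N (sep k a N) := by
  induction N using Nat.strong_induction_on with
  | _ N ih =>
  have hmax : max k 1 = k := by omega
  rcases Nat.eq_zero_or_pos N with rfl | hN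
  · rw [s, S, dif_pos (by omega)]
    simp only [M, sep]
    rw [show 0 + (k - 1) + 1 = k by omega]
    simp
  · rw [M_unfold ha hd0 N (k - 1) (by omega), s, S, dif_neg (by omega), hmax]
    congr 1
    · congr 1
      apply List.map_congr_left
      intro j hj
      rw [List.mem_range] at hj
      rw [show N + (k - 1) + 1 - k - j = N - j by omega]
      by_cases h : N ≤ j
      · rw [Nat.sub_eq_zero_of_le h, hd0]; rfl
      · rw [← ih (N - 1 - j) (by omega), s]
        congr 2
        omega
    · by_cases h : k ≤ N
      · obtain ⟨m, rfl⟩ := Nat.exists_eq_add_of_le' h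
        have hs : sep k a (m + k) = sep k a m := by simp [sep]
        rw [hs, show m + k - (k - 1) = m + 1 by omega, M_succ_sep, ← ih m (by omega), s]
        congr 1
        omega
      · rw [S, dif_pos (by omega), Nat.sub_eq_zero_of_le (by omega : N ≤ k - 1)]
        simp only [M, sep]
        congr 4
        omega

lemma M_sep_succ (hk : 2 ≤ k)
    (ha : ∀ i j, 1 ≤ i → i ≤ k → 1 ≤ j → j ≤ k → a i = a j → i = j) (m : ℕ) :
    M k a d (m + 1) (sep k a (m + 1)) =
      pw (M k a d m (sep k a m)) (d (m + 1)) ++ M k a d m (sep k a (m + 1)) :=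
  M_succ_ne _ _ _ _ (sep_ne ha (by omega) (by omega))

lemma le_length_M_sep (hk : 2 ≤ k)
    (ha : ∀ i j, 1 ≤ i → i ≤ k → 1 ≤ j → j ≤ k → a i = a j → i = j)
    (hd : ∀ i, 1 ≤ i → 1 ≤ d i) (m : ℕ) : m ≤ (M k a d m (sep k a m)).length := by
  induction m with
  | zero => simp
  | succ m ih =>
    rw [M_sep_succ hk ha]
    have h1 := length_M_pos k a d m (sep k a (m + 1))
    have h2 := (prefix_pw_s12 (M k a d m (sep k a m)) (hd (m + 1) (by omega))).length_le
    simp only [List.length_append]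
    omega

lemma M_sep_prefix_add (hd : ∀ i, 1 ≤ i → 1 ≤ d i) (m i : ℕ) :
    M k a d m (sep k a m) <+: M k a d (m + i) (sep k a (m + i)) := by
  induction i with
  | zero => exact List.prefix_rfl
  | succ i ih => exact ih.trans (M_sep_prefix k a hd (m + i) _)

/-- The word `s_n s_n Pal_n` is a factor of `𝐬`. -/
lemma exists_cube_infix (hk : 2 ≤ k)
    (ha : ∀ i j, 1 ≤ i → i ≤ k → 1 ≤ j → j ≤ k → a i = a j → i = j)
    (hd : ∀ i, 1 ≤ i → 1 ≤ d i) (n : ℕ) :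
    ∃ N, M k a d n (sep k a n) ++ (M k a d n (sep k a n) ++ Pal k a d n) <:+:
      M k a d N (sep k a N) := by
  -- `N + 1` is congruent to `n` modulo `k`, so that `s_n` is a suffix of `s_{N+1}`, and `N` is so
  -- large that `s_N` has the prefix `Pal_{n+1}`
  set t := (Pal k a d (n + 1)).length with ht
  obtain ⟨N, hN⟩ : ∃ N, N + 1 = n + k * (t + 1) :=
    ⟨n + k * (t + 1) - 1, by have : 0 < k * (t + 1) := by positivity
                             omega⟩
  have hkt : 2 * (t + 1) ≤ k * (t + 1) := Nat.mul_le_mul_right _ hk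
  have hNt : t ≤ N := by omega
  have hsuf : M k a d n (sep k a n) <:+ M k a d (N + 1) (sep k a (N + 1)) := by
    have : sep k a (N + 1) = sep k a n := by rw [hN]; simp [sep]
    rw [this, hN]
    exact suffix_M ..
  have hpre : Pal k a d (n + 1) <+: M k a d N (sep k a N) := by
    obtain ⟨v, hv⟩ := M_eq_flatMap k a d (n + 1) (N - (n + 1)) (sep k a N)
    rw [show n + 1 + (N - (n + 1)) = N by omega] at hv
    have h1 := Pal_prefix_flatMap k a d (n + 1) v
    rw [← hv] at h1
    exact List.prefix_of_prefix_length_le h1 (List.prefix_append _ _)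
      (hNt.trans (le_length_M_sep hk ha hd N))
  have hpre2 : M k a d n (sep k a n) ++ Pal k a d n <+: Pal k a d (n + 1) := by
    obtain ⟨e, he⟩ := Nat.exists_eq_add_of_le' (hd (n + 1) (by omega))
    simp only [Pal]
    rw [he]
    simp only [pw, List.append_assoc]
    exact (List.prefix_append_right_inj _).2 (prefix_pw_append (Pal_prefix' k a d n _) e)
  refine ⟨N + 2, ?_⟩
  obtain ⟨e, he⟩ := Nat.exists_eq_add_of_le' (hd (N + 1 + 1) (by omega))
  rw [M_sep_succ hk ha, he, pw_succ']
  obtain ⟨p, hp⟩ := hsuf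
  obtain ⟨r, hr⟩ := (hpre2.trans hpre).trans (M_sep_prefix k a hd N (sep k a (N + 1 + 1)))
  refine ⟨pw (M k a d (N + 1) (sep k a (N + 1))) e ++ p, r, ?_⟩
  rw [← hr]
  simp [← hp]

end Blocks

/-! ### Squares of length `|s_n|` -/

theorem stmt12 {α : Type*} (k : ℕ) (hk : 2 ≤ k) (a : ℕ → α)
    (ha : ∀ i j, 1 ≤ i → i ≤ k → 1 ≤ j → j ≤ k → a i = a j → i = j)
    (d : ℕ → ℕ) (hd0 : d 0 = 0) (hd : ∀ i, 1 ≤ i → 1 ≤ d i) (n : ℕ) (hn : 1 ≤ n)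
    (u : List α) (hu : u.length = (s k a d n).length) :
    FactorS k a d (u ++ u) ↔
      ∃ j, j < (s k a d n).length ∧
        u = (s k a d n).drop j ++ (s k a d n).take j := by
  rw [s_eq_M hk ha hd0] at hu ⊢
  constructor
  · rintro ⟨N, hN⟩
    rw [s_eq_M hk ha hd0] at hN
    -- passing to a longer prefix of the infinite word makes it an image under `M (n + 1)`
    have hN' := hN.trans (M_sep_prefix_add hd N (n + 1)).isInfix
    obtain ⟨v, hv⟩ := M_eq_flatMap k a d (n + 1) N (sep k a (N + (n + 1)))
    rw [Nat.add_comm (n + 1) N] at hv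
    rw [hv] at hN'
    obtain ⟨E, hE⟩ := infix_pw_of_square k a hd n u hu v 0
      (by simpa [pw] using hN'.trans (List.prefix_append _ (Pal k a d n)).isInfix)
    exact conj_of_infix_pw _ _ (length_M_pos ..) hu E hE
  · rintro ⟨j, hj, rfl⟩
    obtain ⟨N, hN⟩ := exists_cube_infix hk ha hd n
    refine ⟨N, ?_⟩
    rw [s_eq_M hk ha hd0]
    refine List.IsInfix.trans ?_ hN
    set Y := M k a d n (sep k a n) with hY
    have hlen : Y.length ≤ (Pal k a d n).length + 1 := length_M_le ..
    obtain ⟨r, hr⟩ : Y.take j <+: Pal k a d n :=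
      List.prefix_of_prefix_length_le
        ((List.take_prefix j Y).trans (List.prefix_append Y (Pal k a d n)))
        (Pal_prefix' k a d n _) (by rw [List.length_take]; omega)
    refine ⟨Y.take j, r, ?_⟩
    have hsplit := List.take_append_drop j Y
    rw [← hr]
    generalize Y.take j = y1, Y.drop j = y2 at *
    rw [← hsplit]
    simp

end Epi
end
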